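/- Let n ≥ 2, let V : ℝⁿ → ℝ be an affine function V(x) = a + ⟨b, x⟩ (a ∈ ℝ, b ∈ ℝⁿ), and let ζ : ℝⁿ → ℝⁿ be a C³ vector field. Then for every r > 0, ∫_{S_r} ∑_j 𝕌(V, L_ζδ)_j(x) · (x_j / r) dσ_r(x) = 0: the flux through every sphere of the charge integrand evaluated on a Lie derivative of the flat metric vanishes. -/

import Mathlib

/-! The flux vanishes for two reasons.

* Cancellation (`chargeU_lieFlat`): for affine `V` with gradient `b`, the charge integrand of
  `L_ζ δ` is a divergence, `𝕌_j = ∑_i ∂_i A_ij`, of the antisymmetric tensor field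
  `A_ij = V (∂_i ζ_j - ∂_j ζ_i) + 2 (b_j ζ_i - b_i ζ_j)`, called `potential` below.
* By antisymmetry `∑_ij x_j ∂_i A_ij = ½ ∑_ij (x_j ∂_i - x_i ∂_j) A_ij`. The operator
  `x_j ∂_i - x_i ∂_j` generates the rotations of the `(i, j)`-plane, which preserve the sphere and
  its Hausdorff measure, so its integral against any `C¹` function is the derivative of a constant
  (`integral_rotation_field`).

Splitting the integral into its summands and differentiating under the integral sign require the
sphere to have finite `(n-1)`-dimensional Hausdorff measure (`sphere_hausdorff_lt_top`). -/

open MeasureTheory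

/-- The `i`-th partial derivative of a real-valued function on Euclidean space. -/
noncomputable def pd {n : ℕ} (i : Fin n) (f : EuclideanSpace ℝ (Fin n) → ℝ)
    (x : EuclideanSpace ℝ (Fin n)) : ℝ :=
  fderiv ℝ f x (EuclideanSpace.single i 1)

/-- The Lie derivative of the flat metric along `ζ`: `(L_ζ δ)_{ij} = ∂_i ζ_j + ∂_j ζ_i`. -/
noncomputable def lieFlat {n : ℕ} (ζ : EuclideanSpace ℝ (Fin n) → EuclideanSpace ℝ (Fin n))
    (x : EuclideanSpace ℝ (Fin n)) (i j : Fin n) : ℝ :=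
  pd i (fun y => ζ y j) x + pd j (fun y => ζ y i) x

/-- The charge integrand `𝕌(V,e)_j = V(∑_i ∂_i e_{ij} − ∂_j ∑_i e_{ii})
    − ∑_i (∂_i V) e_{ij} + (∑_i e_{ii}) ∂_j V`. -/
noncomputable def chargeU {n : ℕ} (V : EuclideanSpace ℝ (Fin n) → ℝ)
    (e : EuclideanSpace ℝ (Fin n) → Fin n → Fin n → ℝ) (j : Fin n)
    (x : EuclideanSpace ℝ (Fin n)) : ℝ :=
  V x * ((∑ i, pd i (fun y => e y i j) x) - pd j (fun y => ∑ i, e y i i) x)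
    - (∑ i, pd i V x * e x i j) + (∑ i, e x i i) * pd j V x

/-! ### Coordinate-plane rotations -/

/-- Rotation by the angle `t` in the plane of the `i`-th and `j`-th coordinates, as a perturbation
of the identity; meaningful only for `i ≠ j`. -/
noncomputable def rotFun {n : ℕ} (i j : Fin n) (t : ℝ) (x : EuclideanSpace ℝ (Fin n)) :
    EuclideanSpace ℝ (Fin n) :=
  x + ((Real.cos t - 1) * x i - Real.sin t * x j) • EuclideanSpace.single i (1:ℝ)
    + (Real.sin t * x i + (Real.cos t - 1) * x j) • EuclideanSpace.single j (1:ℝ)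

lemma rotFun_norm {n : ℕ} {i j : Fin n} (hij : i ≠ j) (t : ℝ) (x : EuclideanSpace ℝ (Fin n)) :
    ‖rotFun i j t x‖ = ‖x‖ := by
  have h : ‖rotFun i j t x‖ ^ 2 = ‖x‖ ^ 2 := by
    rw [← real_inner_self_eq_norm_sq, ← real_inner_self_eq_norm_sq]
    have hji := hij.symm
    simp only [rotFun, inner_add_left, inner_add_right, inner_smul_left, inner_smul_right,
      EuclideanSpace.inner_single_left, EuclideanSpace.inner_single_right]
    simp [hij, hji]
    have := Real.sin_sq_add_cos_sq t
    linear_combination (x i ^ 2 + x j ^ 2) * this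
  exact (sq_eq_sq₀ (norm_nonneg _) (norm_nonneg _)).1 h

/-- `rotFun` as a linear isometry equivalence. -/
noncomputable def rot {n : ℕ} {i j : Fin n} (hij : i ≠ j) (t : ℝ) :
    EuclideanSpace ℝ (Fin n) ≃ₗᵢ[ℝ] EuclideanSpace ℝ (Fin n) :=
  LinearIsometry.toLinearIsometryEquiv
    { toFun := rotFun i j t
      map_add' := fun x y => by
        simp only [rotFun, PiLp.add_apply]; module
      map_smul' := fun c x => by
        simp only [rotFun, PiLp.smul_apply, smul_eq_mul, RingHom.id_apply]; module
      norm_map' := rotFun_norm hij t } rfl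

lemma rot_apply {n : ℕ} {i j : Fin n} (hij : i ≠ j) (t : ℝ) (x : EuclideanSpace ℝ (Fin n)) :
   rot hij t x = rotFun i j t x := rfl

/-- The velocity of a rotation orbit at the point `y` is `y_i e_j - y_j e_i`. -/
lemma hasDerivAt_rotFun {n : ℕ} {i j : Fin n} (hij : i ≠ j) (t : ℝ) (x : EuclideanSpace ℝ (Fin n)) :
    HasDerivAt (fun t => rotFun i j t x) ((-(rotFun i j t x j)) • EuclideanSpace.single i (1:ℝ)
      + (rotFun i j t x i) • EuclideanSpace.single j (1:ℝ)) t := by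
  have h1 : HasDerivAt (fun t => (Real.cos t - 1) * x i - Real.sin t * x j)
      (-Real.sin t * x i - Real.cos t * x j) t :=
    (((Real.hasDerivAt_cos t).sub_const 1).mul_const _).sub ((Real.hasDerivAt_sin t).mul_const _)
  have h2 : HasDerivAt (fun t => Real.sin t * x i + (Real.cos t - 1) * x j)
      (Real.cos t * x i + -Real.sin t * x j) t :=
    ((Real.hasDerivAt_sin t).mul_const _).add (((Real.hasDerivAt_cos t).sub_const 1).mul_const _)
  have := (((hasDerivAt_const t x).add (h1.smul_const (EuclideanSpace.single i (1:ℝ)))).add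
    (h2.smul_const (EuclideanSpace.single j (1:ℝ))))
  refine this.congr_deriv ?_
  have hji := hij.symm
  simp only [zero_add]
  congr 2 <;> simp [rotFun, hij, hji] <;> ring

/-! ### Hausdorff measure of the sphere -/

/-- The sphere is covered by the radial projections of the `2(m+1)` faces of the cube `[-1,1]^{m+1}`.
Each is the image of the compact convex set `[-1,1]^m` under a `C¹`, hence Lipschitz, map. -/
lemma sphere_hausdorff_lt_top {m : ℕ} {r : ℝ} (hr : 0 < r) :
    μH[(m : ℝ)] (Metric.sphere (0 : EuclideanSpace ℝ (Fin (m+1))) r) < ⊤ := by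
  -- `p i s u` lies on the hyperplane `x_i = s`; `closedBall 0 1` is a cube, `Fin m → ℝ` having
  -- the sup norm.
  let p : Fin (m+1) → ℝ → (Fin m → ℝ) → EuclideanSpace ℝ (Fin (m+1)) :=
    fun i s u => WithLp.toLp 2 (i.insertNth s u)
  have hp : ∀ i s, ContDiff ℝ 1 (p i s) := by
    intro i s
    rw [contDiff_euclidean]
    intro k
    refine Fin.succAboveCases i ?_ (fun l => ?_) k
    · simp only [p, Fin.insertNth_apply_same]; fun_prop
    · simp only [p, Fin.insertNth_apply_succAbove]; fun_prop
  have hne : ∀ i s, s ≠ 0 → ∀ u, p i s u ≠ 0 := by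
    intro i s hs u h
    apply hs
    have := congrArg (fun y => y i) h
    simpa [p] using this
  have hφ : ∀ i s, s ≠ 0 → ContDiff ℝ 1 (fun u => (r * ‖p i s u‖⁻¹) • p i s u) := by
    intro i s hs
    refine (contDiff_const.mul (((hp i s).norm ℝ (hne i s hs)).inv ?_)).smul (hp i s)
    intro u; exact norm_ne_zero_iff.2 (hne i s hs u)
  have hfin : ∀ i s, s ≠ 0 →
      μH[(m : ℝ)] ((fun u => (r * ‖p i s u‖⁻¹) • p i s u) '' Metric.closedBall 0 1) < ⊤ := by
    intro i s hs
    obtain ⟨K, hK⟩ := (hφ i s hs).contDiffOn.exists_lipschitzOnWith one_ne_zero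
      (convex_closedBall (0 : Fin m → ℝ) 1) (isCompact_closedBall _ _)
    refine (hK.hausdorffMeasure_image_le (Nat.cast_nonneg m)).trans_lt ?_
    refine ENNReal.mul_lt_top (by simp) ?_
    have := @hausdorffMeasure_pi_real (Fin m) _
    rw [Fintype.card_fin] at this
    rw [this]
    exact (isCompact_closedBall _ _).measure_lt_top
  have hcov : Metric.sphere (0 : EuclideanSpace ℝ (Fin (m+1))) r ⊆
      ⋃ i : Fin (m+1), (((fun u => (r * ‖p i 1 u‖⁻¹) • p i 1 u) '' Metric.closedBall 0 1) ∪
        ((fun u => (r * ‖p i (-1) u‖⁻¹) • p i (-1) u) '' Metric.closedBall 0 1)) := by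
    intro x hx
    rw [mem_sphere_zero_iff_norm] at hx
    -- `x` is on the face of its largest coordinate in absolute value.
    obtain ⟨i, hi⟩ := Finite.exists_max (fun i => |x i|)
    have hxi : 0 < |x i| := by
      by_contra hcon
      have hx0 : x = 0 := by
        ext k
        exact abs_nonpos_iff.1 ((hi k).trans (not_lt.1 hcon))
      rw [hx0, norm_zero] at hx
      exact hr.ne hx
    have key : ∀ s : ℝ, x i = s * |x i| →
        x ∈ (fun u => (r * ‖p i s u‖⁻¹) • p i s u) '' Metric.closedBall 0 1 := by
      intro s hs
      refine ⟨fun k => x (i.succAbove k) / |x i|, ?_, ?_⟩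
      · rw [mem_closedBall_zero_iff, pi_norm_le_iff_of_nonneg zero_le_one]
        intro k
        rw [norm_div, Real.norm_eq_abs, Real.norm_eq_abs, abs_abs]
        exact (div_le_one hxi).2 (hi _)
      · have hpx : p i s (fun k => x (i.succAbove k) / |x i|) = |x i|⁻¹ • x := by
          ext k
          refine Fin.succAboveCases i ?_ (fun l => ?_) k
          · simp only [p, Fin.insertNth_apply_same, PiLp.smul_apply, smul_eq_mul]
            field_simp
            linarith
          · simp only [p, Fin.insertNth_apply_succAbove, PiLp.smul_apply, smul_eq_mul]
            field_simp
        simp only [hpx, norm_smul, norm_inv, Real.norm_eq_abs, abs_abs, hx, smul_smul]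
        have : r * (|x i|⁻¹ * r)⁻¹ * |x i|⁻¹ = 1 := by
          field_simp
        rw [this, one_smul]
    refine Set.mem_iUnion.2 ⟨i, ?_⟩
    rcases le_total 0 (x i) with h | h
    · exact Or.inl (key 1 (by rw [abs_of_nonneg h, one_mul]))
    · exact Or.inr (key (-1) (by rw [abs_of_nonpos h]; ring))
  refine (measure_mono hcov).trans_lt ?_
  refine (measure_iUnion_fintype_le _ _).trans_lt ?_
  refine ENNReal.sum_lt_top.2 fun i _ => ?_
  exact (measure_union_le _ _).trans_lt
    (ENNReal.add_lt_top.2 ⟨hfin i 1 (by norm_num), hfin i (-1) (by norm_num)⟩)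

lemma integrableOn_sphere {n : ℕ} (hn : 2 ≤ n) {r : ℝ} (hr : 0 < r)
    {f : EuclideanSpace ℝ (Fin n) → ℝ} (hf : Continuous f) :
    IntegrableOn f (Metric.sphere 0 r) μH[(n : ℝ) - 1] := by
  obtain ⟨m, rfl⟩ : ∃ m, n = m + 1 := ⟨n - 1, by omega⟩
  have hfin := sphere_hausdorff_lt_top (m := m) hr
  rw [show ((m + 1 : ℕ) : ℝ) - 1 = m by push_cast; ring]
  obtain ⟨C, hC⟩ := (isCompact_sphere (0 : EuclideanSpace ℝ (Fin (m + 1))) r).exists_bound_of_continuousOn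
    hf.continuousOn
  exact Measure.integrableOn_of_bounded hfin.ne hf.aestronglyMeasurable
    (ae_restrict_of_forall_mem Metric.isClosed_sphere.measurableSet hC)

/-! ### Rotation generators integrate to zero -/

/-- A rotation generator integrates to zero over the sphere: `∫ f (R_t x)` does not depend on `t`,
and its derivative at `t = 0` is the integral of `x_i ∂_j f - x_j ∂_i f`. -/
lemma integral_rotation_field {n : ℕ} (hn : 2 ≤ n) {r : ℝ} (hr : 0 < r)
    {f : EuclideanSpace ℝ (Fin n) → ℝ} (hf : ContDiff ℝ 1 f) (i j : Fin n) :
    ∫ x in Metric.sphere (0 : EuclideanSpace ℝ (Fin n)) r,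
      (x i * pd j f x - x j * pd i f x) ∂(μH[(n : ℝ) - 1]) = 0 := by
  rcases eq_or_ne i j with rfl | hij
  · simp
  set g : EuclideanSpace ℝ (Fin n) → ℝ := fun x => x i * pd j f x - x j * pd i f x with hg
  have hgc : Continuous g := by
    have := hf.continuous_fderiv one_ne_zero
    simp only [hg, pd]
    fun_prop
  set μ := (μH[(n : ℝ) - 1] : Measure (EuclideanSpace ℝ (Fin n))).restrict
    (Metric.sphere (0 : EuclideanSpace ℝ (Fin n)) r) with hμ
  obtain ⟨C, hC⟩ := (isCompact_sphere (0 : EuclideanSpace ℝ (Fin n)) r).exists_bound_of_continuousOn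
    hgc.continuousOn
  have hconst : ∀ t, ∫ x, f (rot hij t x) ∂μ = ∫ x, f x ∂μ := by
    intro t
    have h := (rot hij t).toIsometryEquiv.measurePreserving_hausdorffMeasure ((n : ℝ) - 1)
    have h2 := h.setIntegral_preimage_emb
      (rot hij t).toIsometryEquiv.toHomeomorph.measurableEmbedding f
      (Metric.sphere (0 : EuclideanSpace ℝ (Fin n)) r)
    have hpre : (rot hij t).toIsometryEquiv ⁻¹' (Metric.sphere 0 r) = Metric.sphere 0 r := by
      ext x
      simp
    rw [hpre] at h2
    exact h2
  have hder : ∀ t x, HasDerivAt (fun t => f (rot hij t x)) (g (rot hij t x)) t := by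
    intro t x
    have h := ((hf.differentiable one_ne_zero (rot hij t x)).hasFDerivAt).comp_hasDerivAt t
      (hasDerivAt_rotFun hij t x)
    refine h.congr_deriv ?_
    simp only [hg, pd, map_add, map_smul, smul_eq_mul, rot_apply]
    ring
  have hcont : ∀ {h : EuclideanSpace ℝ (Fin n) → ℝ}, Continuous h → ∀ t,
      Integrable (fun x => h (rot hij t x)) μ := fun hh t =>
    integrableOn_sphere hn hr (hh.comp (rot hij t).continuous)
  have hmain := (hasDerivAt_integral_of_dominated_loc_of_deriv_le (μ := μ)
    (F := fun t x => f (rot hij t x)) (F' := fun t x => g (rot hij t x)) (x₀ := 0)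
    (s := Set.univ) (bound := fun _ => C) Filter.univ_mem
    (Filter.Eventually.of_forall fun t => (hcont hf.continuous t).aestronglyMeasurable)
    (hcont hf.continuous 0) (hcont hgc 0).aestronglyMeasurable
    (ae_restrict_of_forall_mem Metric.isClosed_sphere.measurableSet fun x hx t _ =>
      hC _ (by simpa using hx))
    (integrableOn_sphere hn hr continuous_const)
    (Filter.Eventually.of_forall fun x t _ => hder t x)).2
  have h0 : ∀ x, rot hij 0 x = x := fun x => by simp [rot_apply, rotFun]
  simp only [hconst, h0] at hmain
  exact hmain.unique (hasDerivAt_const _ _)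

/-! ### The charge integrand as a divergence -/

section Cancellation
variable {n : ℕ}

lemma pd_add {f g : EuclideanSpace ℝ (Fin n) → ℝ} {x} (i : Fin n) (hf : DifferentiableAt ℝ f x)
    (hg : DifferentiableAt ℝ g x) : pd i (fun y => f y + g y) x = pd i f x + pd i g x := by
  simp [pd, fderiv_fun_add hf hg]

lemma pd_sub {f g : EuclideanSpace ℝ (Fin n) → ℝ} {x} (i : Fin n) (hf : DifferentiableAt ℝ f x)
    (hg : DifferentiableAt ℝ g x) : pd i (fun y => f y - g y) x = pd i f x - pd i g x := by
  simp [pd, fderiv_fun_sub hf hg]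

lemma pd_mul {f g : EuclideanSpace ℝ (Fin n) → ℝ} {x} (i : Fin n) (hf : DifferentiableAt ℝ f x)
    (hg : DifferentiableAt ℝ g x) :
    pd i (fun y => f y * g y) x = f x * pd i g x + g x * pd i f x := by
  simp [pd, fderiv_fun_mul hf hg]

lemma pd_const_mul {f : EuclideanSpace ℝ (Fin n) → ℝ} {x} (i : Fin n) (c : ℝ)
    (hf : DifferentiableAt ℝ f x) : pd i (fun y => c * f y) x = c * pd i f x := by
  simp [pd, fderiv_const_mul hf]

lemma pd_sum {f : Fin n → EuclideanSpace ℝ (Fin n) → ℝ} {x} (i : Fin n)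
    (hf : ∀ k, DifferentiableAt ℝ (f k) x) :
    pd i (fun y => ∑ k, f k y) x = ∑ k, pd i (f k) x := by
  simp [pd, fderiv_fun_sum (fun k _ => hf k)]

lemma contDiff_pd {f : EuclideanSpace ℝ (Fin n) → ℝ} {k l : ℕ} (hf : ContDiff ℝ k f)
    (hl : l + 1 ≤ k) (i : Fin n) : ContDiff ℝ l (fun y => pd i f y) := by
  unfold pd
  exact (hf.fderiv_right (by exact_mod_cast hl)).clm_apply contDiff_const

lemma pd_comm {f : EuclideanSpace ℝ (Fin n) → ℝ} (hf : ContDiff ℝ 2 f) (i j : Fin n) (x) :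
    pd i (fun y => pd j f y) x = pd j (fun y => pd i f y) x := by
  have hd : DifferentiableAt ℝ (fderiv ℝ f) x :=
    (hf.fderiv_right (m := 1) (by norm_num)).differentiable one_ne_zero x
  have h : IsSymmSndFDerivAt ℝ f x := hf.contDiffAt.isSymmSndFDerivAt (by simp)
  have key : ∀ k l : Fin n, pd k (fun y => pd l f y) x =
      fderiv ℝ (fderiv ℝ f) x (EuclideanSpace.single k 1) (EuclideanSpace.single l 1) := by
    intro k l
    unfold pd
    rw [fderiv_clm_apply hd (differentiableAt_const _)]
    simp
  rw [key, key]
  exact h _ _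

lemma hasFDerivAt_affine (a : ℝ) (b : EuclideanSpace ℝ (Fin n)) {V : EuclideanSpace ℝ (Fin n) → ℝ}
    (hV : ∀ x, V x = a + ∑ i, b i * x i) (x) : HasFDerivAt V (innerSL ℝ b) x := by
  have : V = fun x => a + innerSL ℝ b x := by
    ext y
    rw [hV, innerSL_apply_apply, PiLp.inner_apply]
    simp [mul_comm]
  rw [this]
  exact (innerSL ℝ b).hasFDerivAt.const_add a

/-- The antisymmetric tensor field `A_ij = V (∂_i ζ_j - ∂_j ζ_i) + 2 (b_j ζ_i - b_i ζ_j)` whose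
divergence in the first index is the charge integrand, where `b` is the gradient of `V`. -/
noncomputable def potential (V : EuclideanSpace ℝ (Fin n) → ℝ) (b : EuclideanSpace ℝ (Fin n))
    (ζ : EuclideanSpace ℝ (Fin n) → EuclideanSpace ℝ (Fin n)) (i j : Fin n)
    (x : EuclideanSpace ℝ (Fin n)) : ℝ :=
  V x * (pd i (fun y => ζ y j) x - pd j (fun y => ζ y i) x) + 2 * (b j * ζ x i - b i * ζ x j)

lemma potential_antisymm (V : EuclideanSpace ℝ (Fin n) → ℝ) (b : EuclideanSpace ℝ (Fin n))
    (ζ : EuclideanSpace ℝ (Fin n) → EuclideanSpace ℝ (Fin n)) (i j : Fin n) :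
    potential V b ζ j i = fun x => (-1) * potential V b ζ i j x := by
  ext x; unfold potential; ring

lemma contDiff_potential {a : ℝ} {b : EuclideanSpace ℝ (Fin n)}
    {V : EuclideanSpace ℝ (Fin n) → ℝ} (hV : ∀ x, V x = a + ∑ i, b i * x i)
    {ζ : EuclideanSpace ℝ (Fin n) → EuclideanSpace ℝ (Fin n)} (hζ : ContDiff ℝ 2 ζ)
    (i j : Fin n) : ContDiff ℝ 1 (potential V b ζ i j) := by
  have hZ : ∀ k, ContDiff ℝ 2 (fun y => ζ y k) := contDiff_euclidean.1 hζ
  have hZ1 : ∀ k, ContDiff ℝ 1 (fun y => ζ y k) := fun k => (hZ k).of_le (by norm_num)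
  have hP : ∀ k l, ContDiff ℝ 1 (fun y => pd k (fun z => ζ z l) y) :=
    fun k l => contDiff_pd (l := 1) (k := 2) (hZ l) le_rfl k
  have hVc : ContDiff ℝ 1 V := by
    rw [funext hV]; fun_prop
  exact (hVc.mul ((hP i j).sub (hP j i))).add
    (contDiff_const.mul ((contDiff_const.mul (hZ1 i)).sub (contDiff_const.mul (hZ1 j))))

/-- The flat Cancellation Lemma; commuting second derivatives of `ζ` reduces it to algebra. -/
lemma chargeU_lieFlat {a : ℝ} {b : EuclideanSpace ℝ (Fin n)}
    {V : EuclideanSpace ℝ (Fin n) → ℝ} (hV : ∀ x, V x = a + ∑ i, b i * x i)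
    {ζ : EuclideanSpace ℝ (Fin n) → EuclideanSpace ℝ (Fin n)} (hζ : ContDiff ℝ 2 ζ)
    (j : Fin n) (x : EuclideanSpace ℝ (Fin n)) :
    chargeU V (fun y => lieFlat ζ y) j x = ∑ i, pd i (potential V b ζ i j) x := by
  have hZ : ∀ k, ContDiff ℝ 2 (fun y => ζ y k) := contDiff_euclidean.1 hζ
  have hZd : ∀ k, DifferentiableAt ℝ (fun y => ζ y k) x :=
    fun k => (hZ k).differentiable two_ne_zero x
  have hP : ∀ k l, DifferentiableAt ℝ (fun y => pd k (fun z => ζ z l) y) x :=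
    fun k l => (contDiff_pd (l := 1) (k := 2) (hZ l) le_rfl k).differentiable one_ne_zero x
  have hVd : DifferentiableAt ℝ V x := (hasFDerivAt_affine a b hV x).differentiableAt
  have hVp : ∀ k, pd k V x = b k := by
    intro k
    simp [pd, (hasFDerivAt_affine a b hV x).fderiv, EuclideanSpace.inner_single_right]
  have hA : ∀ i, pd i (potential V b ζ i j) x =
      V x * (pd i (fun y => pd i (fun z => ζ z j) y) x - pd i (fun y => pd j (fun z => ζ z i) y) x)
        + (pd i (fun y => ζ y j) x - pd j (fun y => ζ y i) x) * b i
        + 2 * (b j * pd i (fun y => ζ y i) x - b i * pd i (fun y => ζ y j) x) := by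
    intro i
    have hb : ∀ (c : ℝ) k, DifferentiableAt ℝ (fun y => c * ζ y k) x :=
      fun c k => (hZd k).const_mul c
    have hR : DifferentiableAt ℝ
        (fun y => pd i (fun z => ζ z j) y - pd j (fun z => ζ z i) y) x := (hP i j).sub (hP j i)
    have hVR : DifferentiableAt ℝ
        (fun y => V y * (pd i (fun z => ζ z j) y - pd j (fun z => ζ z i) y)) x := hVd.mul hR
    have hB : DifferentiableAt ℝ (fun y => b j * ζ y i - b i * ζ y j) x :=
      (hb _ i).sub (hb _ j)
    unfold potential
    rw [pd_add i hVR (hB.const_mul 2), pd_mul i hVd hR, pd_sub i (hP i j) (hP j i),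
      pd_const_mul i 2 hB, pd_sub i (hb _ i) (hb _ j), pd_const_mul i _ (hZd i),
      pd_const_mul i _ (hZd j), hVp]
  have hE : ∀ k i l, pd k (fun y => lieFlat ζ y i l) x =
      pd k (fun y => pd i (fun z => ζ z l) y) x + pd k (fun y => pd l (fun z => ζ z i) y) x :=
    fun k i l => pd_add k (hP i l) (hP l i)
  have hEd : ∀ i, DifferentiableAt ℝ (fun y => lieFlat ζ y i i) x :=
    fun i => (hP i i).add (hP i i)
  unfold chargeU
  rw [pd_sum j hEd]
  simp only [hE, hA, hVp]
  simp only [lieFlat, Finset.sum_mul, ← Finset.sum_sub_distrib, Finset.mul_sum,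
    ← Finset.sum_add_distrib]
  refine Finset.sum_congr rfl fun i _ => ?_
  rw [pd_comm (hZ i) j i]
  ring

end Cancellation

/-! ### The flux -/

/-- for `n ≥ 2`, an affine function `V(x) = a + ⟨b, x⟩` and a `C³` vector
field `ζ`, the flux of the charge integrand `𝕌(V, L_ζδ)` through every Euclidean sphere
vanishes. -/
theorem flux_of_charge_integrand_on_lie_derivative_vanishes
    (n : ℕ) (hn : 2 ≤ n)
    (a : ℝ) (b : EuclideanSpace ℝ (Fin n))
    (V : EuclideanSpace ℝ (Fin n) → ℝ)
    (hV : ∀ x, V x = a + ∑ i, b i * x i)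
    (ζ : EuclideanSpace ℝ (Fin n) → EuclideanSpace ℝ (Fin n))
    (hζ : ContDiff ℝ 3 ζ)
    (r : ℝ) (hr : 0 < r) :
    ∫ x in Metric.sphere (0 : EuclideanSpace ℝ (Fin n)) r,
        (∑ j, chargeU V (fun y => lieFlat ζ y) j x * (x j / r)) ∂(μH[(n : ℝ) - 1]) = 0 := by
  have hζ2 : ContDiff ℝ 2 ζ := hζ.of_le (by norm_num)
  have hA : ∀ i j, ContDiff ℝ 1 (potential V b ζ i j) := contDiff_potential hV hζ2
  have hpt : ∀ x : EuclideanSpace ℝ (Fin n),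
      ∑ j, chargeU V (fun y => lieFlat ζ y) j x * (x j / r) =
      (2 * r)⁻¹ * ∑ j, ∑ i, (x j * pd i (potential V b ζ i j) x
        - x i * pd j (potential V b ζ i j) x) := by
    intro x
    have hswap : ∑ j, ∑ i, x i * pd j (potential V b ζ i j) x
        = - ∑ j, ∑ i, x j * pd i (potential V b ζ i j) x := by
      rw [Finset.sum_comm, ← Finset.sum_neg_distrib]
      refine Finset.sum_congr rfl fun i _ => ?_
      rw [← Finset.sum_neg_distrib]
      refine Finset.sum_congr rfl fun j _ => ?_
      rw [potential_antisymm V b ζ j i,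
        pd_const_mul j (-1) ((hA j i).differentiable one_ne_zero x)]
      ring
    simp only [Finset.sum_sub_distrib]
    rw [hswap, sub_neg_eq_add, ← two_mul, ← mul_assoc, Finset.mul_sum]
    refine Finset.sum_congr rfl fun j _ => ?_
    rw [chargeU_lieFlat hV hζ2, ← Finset.mul_sum]
    field_simp
  have h_integrable : ∀ i j, IntegrableOn (fun x => x j * pd i (potential V b ζ i j) x
      - x i * pd j (potential V b ζ i j) x) (Metric.sphere 0 r) μH[(n : ℝ) - 1] := by
    intro i j
    refine integrableOn_sphere hn hr ?_
    have := (hA i j).continuous_fderiv one_ne_zero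
    simp only [pd]
    fun_prop
  simp only [hpt]
  rw [integral_const_mul, integral_finsetSum _
    (fun j _ => integrable_finsetSum _ fun i _ => h_integrable i j)]
  simp only [integral_finsetSum _ (fun i _ => h_integrable i _), integral_rotation_field hn hr (hA _ _),
    Finset.sum_const_zero, mul_zero]
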